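/- arXiv:1707.03492 — 3 statements merged into one kernel-verified Lean document; each statement's English description precedes it below -/
import Mathlib

section
/- (Convergence of an Anchored Mutual Chain) In the robot model on a line, let y₁, …, y_k be non-faulty robots such that for every time t: r(y_i, t) = x t y_{i+1} and l(y_{i+1}, t) = x t y_i for all 1 ≤ i ≤ k−1 (a mutual chain at all times), l(y₁, t) < x t y₁ and r(y_k, t) > x t y_k (the anchors are distinct from the chain's endpoints), and suppose there are real numbers A and B with l(y₁, t) → A and r(y_k, t) → B as t → ∞. Then for every 1 ≤ i ≤ k, x t y_i → A + i·(B − A)/(k+1) as t → ∞; i.e., the chain converges to a configuration of equidistant robots between A and B. -/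
open Filter Topology

/-- Position of the farthest left robot visible from robot `i` at time `t`
(visibility radius `V`). -/
noncomputable def lpos {n : ℕ} (V : ℝ) (x : ℕ → Fin (n + 1) → ℝ)
    (t : ℕ) (i : Fin (n + 1)) : ℝ :=
  sInf (x t '' {j | |x t j - x t i| ≤ V})

/-- Position of the farthest right robot visible from robot `i` at time `t`
(visibility radius `V`). -/
noncomputable def rpos {n : ℕ} (V : ℝ) (x : ℕ → Fin (n + 1) → ℝ)
    (t : ℕ) (i : Fin (n + 1)) : ℝ :=
  sSup (x t '' {j | |x t j - x t i| ≤ V})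

/-!
Together with its two anchors, the chain evolves by the rule that every interior position becomes
the midpoint of its two neighbours. The equidistant configuration between `A` and `B` is fixed by
this rule, so the distances to it satisfy the same averaging rule as an inequality, with boundary
values tending to `0`. Pair these distances with the principal Dirichlet eigenvector
`i ↦ sin (iπ / (k + 1))` of the averaging operator, which is positive in the interior: one time step
contracts the pairing by the eigenvalue `cos (π / (k + 1)) ∈ [0, 1)`, up to a boundary term that
vanishes in the limit.
-/

section AveragingRecursion

theorem tendsto_zero_of_le_mul_add {s b : ℕ → ℝ} {ρ : ℝ} (hρ₀ : 0 ≤ ρ) (hρ₁ : ρ < 1)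
    (hs : ∀ t, 0 ≤ s t) (hrec : ∀ᶠ t in atTop, s (t + 1) ≤ ρ * s t + b t)
    (hb : Tendsto b atTop (𝓝 0)) : Tendsto s atTop (𝓝 0) := by
  refine tendsto_order.2 ⟨fun δ hδ => .of_forall fun t => hδ.trans_le (hs t), fun ε hε => ?_⟩
  have hb_small : ∀ᶠ t in atTop, b t < (1 - ρ) * (ε / 2) :=
    hb.eventually_lt_const (mul_pos (sub_pos.2 hρ₁) (half_pos hε))
  obtain ⟨T, hT⟩ := eventually_atTop.1 (hrec.and hb_small)
  -- `ε / 2` is the fixed point of `s ↦ ρ * s + (1 - ρ) * (ε / 2)`, so the excess over it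
  -- decays geometrically.
  have hgeom (m : ℕ) : s (T + m) - ε / 2 ≤ ρ ^ m * (s T - ε / 2) := by
    refine le_geom (u := fun m => s (T + m) - ε / 2) hρ₀ m fun j _ => ?_
    obtain ⟨hstep, hsmall⟩ := hT (T + j) (Nat.le_add_right T j)
    simp only [← add_assoc]
    linarith
  have hpow : Tendsto (fun m => ρ ^ m * (s T - ε / 2)) atTop (𝓝 0) := by
    simpa only [zero_mul] using
      (tendsto_pow_atTop_nhds_zero_of_lt_one hρ₀ hρ₁).mul_const (s T - ε / 2)
  obtain ⟨M, hM⟩ := eventually_atTop.1 (hpow.eventually_lt_const (half_pos hε))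
  filter_upwards [eventually_ge_atTop (T + M)] with t ht
  have hdecay := hgeom (t - T)
  rw [Nat.add_sub_of_le (by lia)] at hdecay
  linarith [hM (t - T) (by lia)]

theorem green_identity_sum_range {R : Type*} [CommRing R] (w a : ℕ → R) (k : ℕ) :
    ∑ i ∈ Finset.range k, (w (i + 1) * (a i + a (i + 2)) - (w i + w (i + 2)) * a (i + 1)) =
      (w 1 * a 0 - w 0 * a 1) + (w k * a (k + 1) - w (k + 1) * a k) := by
  calc
    _ = ∑ i ∈ Finset.range k, ((w (i + 1) * a i - w i * a (i + 1)) -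
          (w (i + 2) * a (i + 1) - w (i + 1) * a (i + 2))) :=
      Finset.sum_congr rfl fun i _ => by ring
    _ = (w 1 * a 0 - w 0 * a 1) - (w (k + 1) * a k - w k * a (k + 1)) :=
      Finset.sum_range_sub' (fun i => w (i + 1) * a i - w i * a (i + 1)) k
    _ = _ := by ring

/-- The principal eigenvector of the averaging operator `a ↦ fun i => (a (i - 1) + a (i + 1)) / 2`
on `{1, …, k}` with boundary value `0` at `0` and `k + 1`. -/
noncomputable def sineWeight (k i : ℕ) : ℝ :=
  Real.sin (i * (Real.pi / (k + 1)))

theorem sineWeight_zero (k : ℕ) : sineWeight k 0 = 0 := by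
  simp [sineWeight]

theorem sineWeight_succ_self (k : ℕ) : sineWeight k (k + 1) = 0 := by
  have hk : (k : ℝ) + 1 ≠ 0 := by positivity
  simp [sineWeight, mul_div_cancel₀ _ hk]

theorem sineWeight_succ_pos {k i : ℕ} (hi : i < k) : 0 < sineWeight k (i + 1) := by
  have hik : ((i + 1 : ℕ) : ℝ) < k + 1 := by exact_mod_cast Nat.succ_lt_succ hi
  refine Real.sin_pos_of_pos_of_lt_pi (by positivity) ?_
  calc
    ((i + 1 : ℕ) : ℝ) * (Real.pi / (k + 1)) < (k + 1) * (Real.pi / (k + 1)) := by gcongr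
    _ = Real.pi := by field_simp

theorem sineWeight_add_sineWeight_add_two (k i : ℕ) :
    sineWeight k i + sineWeight k (i + 2) =
      2 * Real.cos (Real.pi / (k + 1)) * sineWeight k (i + 1) := by
  have h := Real.two_mul_sin_mul_cos ((i + 1 : ℕ) * (Real.pi / (k + 1))) (Real.pi / (k + 1))
  simp only [sineWeight]
  push_cast at h ⊢
  ring_nf at h ⊢
  exact h.symm

/-- The pairing of the interior values `a 1, …, a k` with the weights `sineWeight k`: a weighted
`ℓ¹` norm when they are nonnegative, used as a Lyapunov function for averaging. -/
noncomputable def sineSum (k : ℕ) (a : ℕ → ℝ) : ℝ :=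
  ∑ i ∈ Finset.range k, sineWeight k (i + 1) * a (i + 1)

theorem sineSum_nonneg (k : ℕ) {a : ℕ → ℝ} (ha : ∀ i, 0 ≤ a i) : 0 ≤ sineSum k a :=
  Finset.sum_nonneg fun i hi =>
    mul_nonneg (sineWeight_succ_pos (Finset.mem_range.1 hi)).le (ha (i + 1))

theorem sineWeight_mul_le_sineSum {k i : ℕ} {a : ℕ → ℝ} (ha : ∀ i, 0 ≤ a i) (hi : i < k) :
    sineWeight k (i + 1) * a (i + 1) ≤ sineSum k a :=
  Finset.single_le_sum (f := fun i => sineWeight k (i + 1) * a (i + 1))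
    (fun j hj => mul_nonneg (sineWeight_succ_pos (Finset.mem_range.1 hj)).le (ha (j + 1)))
    (Finset.mem_range.2 hi)

theorem sineSum_le_cos_mul_sineSum_add {k : ℕ} {a c : ℕ → ℝ}
    (hc : ∀ i < k, c (i + 1) ≤ (a i + a (i + 2)) / 2) :
    sineSum k c ≤ Real.cos (Real.pi / (k + 1)) * sineSum k a +
      (sineWeight k 1 * a 0 + sineWeight k k * a (k + 1)) / 2 := by
  have hgreen := green_identity_sum_range (sineWeight k) a k
  simp only [sineWeight_add_sineWeight_add_two, sineWeight_zero, sineWeight_succ_self, zero_mul,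
    sub_zero, Finset.sum_sub_distrib, mul_assoc, ← Finset.mul_sum] at hgreen
  calc
    sineSum k c
      ≤ ∑ i ∈ Finset.range k, sineWeight k (i + 1) * ((a i + a (i + 2)) / 2) :=
        Finset.sum_le_sum fun i hi => mul_le_mul_of_nonneg_left (hc i (Finset.mem_range.1 hi))
          (sineWeight_succ_pos (Finset.mem_range.1 hi)).le
    _ = (∑ i ∈ Finset.range k, sineWeight k (i + 1) * (a i + a (i + 2))) / 2 := by
        simp only [Finset.sum_div, mul_div_assoc]
    _ = _ := by
        simp only [sineSum]
        linarith

theorem tendsto_zero_of_le_average {k : ℕ} {a : ℕ → ℕ → ℝ} (ha : ∀ t i, 0 ≤ a t i)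
    (hrec : ∀ᶠ t in atTop, ∀ i < k, a (t + 1) (i + 1) ≤ (a t i + a t (i + 2)) / 2)
    (hleft : Tendsto (fun t => a t 0) atTop (𝓝 0))
    (hright : Tendsto (fun t => a t (k + 1)) atTop (𝓝 0)) {i : ℕ} (hi : i < k) :
    Tendsto (fun t => a t (i + 1)) atTop (𝓝 0) := by
  have hk : (1 : ℝ) ≤ k := by exact_mod_cast (Nat.zero_le i).trans_lt hi
  have hθ_pos : 0 < Real.pi / (k + 1) := by positivity
  have hθ_le : Real.pi / (k + 1) ≤ Real.pi / 2 := by gcongr; linarith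
  have hcos_nonneg : 0 ≤ Real.cos (Real.pi / (k + 1)) :=
    Real.cos_nonneg_of_neg_pi_div_two_le_of_le (by linarith) hθ_le
  have hcos_lt_one : Real.cos (Real.pi / (k + 1)) < 1 := by
    simpa only [Real.cos_zero] using
      Real.cos_lt_cos_of_nonneg_of_le_pi_div_two le_rfl hθ_le hθ_pos
  have hboundary : Tendsto
      (fun t => (sineWeight k 1 * a t 0 + sineWeight k k * a t (k + 1)) / 2) atTop (𝓝 0) := by
    simpa only [mul_zero, add_zero, zero_div] using
      ((hleft.const_mul (sineWeight k 1)).add (hright.const_mul (sineWeight k k))).div_const 2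
  have hsum : Tendsto (fun t => sineSum k (a t)) atTop (𝓝 0) :=
    tendsto_zero_of_le_mul_add hcos_nonneg hcos_lt_one (fun t => sineSum_nonneg k (ha t))
      (hrec.mono fun t ht => sineSum_le_cos_mul_sineSum_add ht) hboundary
  refine squeeze_zero (fun t => ha t (i + 1)) (fun t => ?_)
    (by simpa only [zero_div] using hsum.div_const (sineWeight k (i + 1)))
  rw [le_div_iff₀' (sineWeight_succ_pos hi)]
  exact sineWeight_mul_le_sineSum (ha t) hi

theorem tendsto_lineMap_of_eq_midpoint {E P : Type*} [NormedAddCommGroup E] [NormedSpace ℝ E]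
    [PseudoMetricSpace P] [NormedAddTorsor E P] {k : ℕ} {u : ℕ → ℕ → P} {A B : P}
    (hrec : ∀ᶠ t in atTop, ∀ i < k, u (t + 1) (i + 1) = midpoint ℝ (u t i) (u t (i + 2)))
    (hleft : Tendsto (fun t => u t 0) atTop (𝓝 A))
    (hright : Tendsto (fun t => u t (k + 1)) atTop (𝓝 B)) {i : ℕ} (hi : i < k) :
    Tendsto (fun t => u t (i + 1)) atTop
      (𝓝 (AffineMap.lineMap A B (((i + 1 : ℕ) : ℝ) / (k + 1)))) := by
  have hk : (k : ℝ) + 1 ≠ 0 := by positivity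
  set p : ℕ → P := fun i => AffineMap.lineMap A B ((i : ℝ) / (k + 1)) with hp
  have hp_left : p 0 = A := by simp [hp]
  have hp_right : p (k + 1) = B := by simp [hp, hk]
  have hp_midpoint (i : ℕ) : p (i + 1) = midpoint ℝ (p i) (p (i + 2)) := by
    simp only [hp, ← AffineMap.map_midpoint, midpoint_eq_smul_add, invOf_eq_inv, smul_eq_mul]
    congr 1
    push_cast
    ring
  refine tendsto_iff_dist_tendsto_zero.2 <| tendsto_zero_of_le_average
    (a := fun t i => dist (u t i) (p i)) (fun _ _ => dist_nonneg) ?_ ?_ ?_ hi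
  · filter_upwards [hrec] with t ht i hi
    rw [ht i hi, hp_midpoint i]
    simpa only [Real.norm_ofNat] using
      dist_midpoint_midpoint_le' (𝕜 := ℝ) (u t i) (u t (i + 2)) (p i) (p (i + 2))
  · simpa only [hp_left] using tendsto_iff_dist_tendsto_zero.1 hleft
  · simpa only [hp_right] using tendsto_iff_dist_tendsto_zero.1 hright

end AveragingRecursion

section MutualChain

variable {n : ℕ} {V : ℝ} {x : ℕ → Fin (n + 1) → ℝ} {k t : ℕ} {y : ℕ → Fin (n + 1)}

/-- The robots `y 1, …, y k` form a mutual chain at time `t`: consecutive robots are at the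
positions of each other's farthest visible neighbours. The remaining values of `y` are ignored. -/
def IsMutualChain (V : ℝ) (x : ℕ → Fin (n + 1) → ℝ) (k : ℕ) (y : ℕ → Fin (n + 1))
    (t : ℕ) : Prop :=
  ∀ i, 1 ≤ i → i < k → rpos V x t (y i) = x t (y (i + 1)) ∧ lpos V x t (y (i + 1)) = x t (y i)

/-- Positions at time `t` along the chain `y 1, …, y k` extended by its anchors, which get the
indices `0` and `k + 1` (the value at every index above `k` is the right anchor). -/
noncomputable def chainPos (V : ℝ) (x : ℕ → Fin (n + 1) → ℝ) (k : ℕ) (y : ℕ → Fin (n + 1))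
    (t : ℕ) : ℕ → ℝ
  | 0 => lpos V x t (y 1)
  | i + 1 => if i < k then x t (y (i + 1)) else rpos V x t (y k)

theorem chainPos_succ_of_lt {i : ℕ} (hi : i < k) :
    chainPos V x k y t (i + 1) = x t (y (i + 1)) :=
  if_pos hi

theorem chainPos_succ_self : chainPos V x k y t (k + 1) = rpos V x t (y k) :=
  if_neg k.lt_irrefl

theorem IsMutualChain.lpos_eq_chainPos (hchain : IsMutualChain V x k y t) {i : ℕ} (hi : i < k) :
    lpos V x t (y (i + 1)) = chainPos V x k y t i := by
  cases i with
  | zero => rfl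
  | succ j => rw [chainPos_succ_of_lt (by lia), (hchain (j + 1) (by lia) hi).2]

theorem IsMutualChain.rpos_eq_chainPos (hchain : IsMutualChain V x k y t) {i : ℕ} (hi : i < k) :
    rpos V x t (y (i + 1)) = chainPos V x k y t (i + 2) := by
  obtain rfl | hlt := Nat.eq_or_lt_of_le (Nat.succ_le_of_lt hi)
  · exact chainPos_succ_self.symm
  · rw [chainPos_succ_of_lt hlt, (hchain (i + 1) (by lia) hlt).1]

theorem IsMutualChain.chainPos_succ_eq_midpoint (hchain : IsMutualChain V x k y t) {i : ℕ}
    (hi : i < k)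
    (hupd : x (t + 1) (y (i + 1)) = (lpos V x t (y (i + 1)) + rpos V x t (y (i + 1))) / 2) :
    chainPos V x k y (t + 1) (i + 1) =
      midpoint ℝ (chainPos V x k y t i) (chainPos V x k y t (i + 2)) := by
  rw [chainPos_succ_of_lt hi, hupd, hchain.lpos_eq_chainPos hi, hchain.rpos_eq_chainPos hi,
    midpoint_eq_smul_add, invOf_eq_inv, smul_eq_mul, inv_mul_eq_div]

theorem anchored_chain_convergence_general
    (hupd : ∀ᶠ t in atTop, ∀ i, 1 ≤ i → i ≤ k →
      x (t + 1) (y i) = (lpos V x t (y i) + rpos V x t (y i)) / 2)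
    (hchain : ∀ᶠ t in atTop, IsMutualChain V x k y t) {A B : ℝ}
    (hA : Tendsto (fun t => lpos V x t (y 1)) atTop (𝓝 A))
    (hB : Tendsto (fun t => rpos V x t (y k)) atTop (𝓝 B)) {i : ℕ} (hi₁ : 1 ≤ i) (hik : i ≤ k) :
    Tendsto (fun t => x t (y i)) atTop (𝓝 (A + (i : ℝ) * (B - A) / ((k : ℝ) + 1))) := by
  obtain ⟨j, rfl⟩ := Nat.exists_eq_add_of_le' hi₁
  have hrec : ∀ᶠ t in atTop, ∀ i < k, chainPos V x k y (t + 1) (i + 1) =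
      midpoint ℝ (chainPos V x k y t i) (chainPos V x k y t (i + 2)) := by
    filter_upwards [hupd, hchain] with t hupd_t hchain_t i hi
    exact hchain_t.chainPos_succ_eq_midpoint hi (hupd_t (i + 1) (by lia) hi)
  have hlim := tendsto_lineMap_of_eq_midpoint hrec hA (by simpa only [chainPos_succ_self]) hik
  simp only [chainPos_succ_of_lt hik] at hlim
  convert hlim using 2
  rw [AffineMap.lineMap_apply_ring']
  ring

end MutualChain

/-- (Convergence of an Anchored Mutual Chain) A mutual chain whose anchors
converge to `A` and `B` converges to a configuration of equidistant robots
between `A` and `B`. -/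
theorem anchored_chain_convergence
    (n : ℕ) (hn : 2 ≤ n) (V D : ℝ) (hV : 0 < V) (hD : 0 < D)
    (x : ℕ → Fin (n + 1) → ℝ)
    (hfault0 : ∀ t : ℕ, x t 0 = 0)
    (hfaultn : ∀ t : ℕ, x t (Fin.last n) = D)
    (hupd : ∀ t : ℕ, ∀ i : Fin (n + 1), i ≠ 0 → i ≠ Fin.last n →
      x (t + 1) i = (lpos V x t i + rpos V x t i) / 2)
    (k : ℕ) (hk : 1 ≤ k) (y : ℕ → Fin (n + 1))
    (hnonfaulty : ∀ i : ℕ, 1 ≤ i → i ≤ k → y i ≠ 0 ∧ y i ≠ Fin.last n)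
    (hchain : ∀ t : ℕ, ∀ i : ℕ, 1 ≤ i → i ≤ k - 1 →
      rpos V x t (y i) = x t (y (i + 1)) ∧
      lpos V x t (y (i + 1)) = x t (y i))
    (hanchorL : ∀ t : ℕ, lpos V x t (y 1) < x t (y 1))
    (hanchorR : ∀ t : ℕ, rpos V x t (y k) > x t (y k))
    (A B : ℝ)
    (hA : Tendsto (fun t => lpos V x t (y 1)) atTop (nhds A))
    (hB : Tendsto (fun t => rpos V x t (y k)) atTop (nhds B)) :
    ∀ i : ℕ, 1 ≤ i → i ≤ k →
      Tendsto (fun t => x t (y i)) atTop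
        (nhds (A + (i : ℝ) * (B - A) / ((k : ℝ) + 1))) :=
  fun _ hi₁ hik => anchored_chain_convergence_general
    (.of_forall fun t i hi₁ hik => hupd t (y i) (hnonfaulty i hi₁ hik).1 (hnonfaulty i hi₁ hik).2)
    (.of_forall fun t i hi₁ hik => hchain t i hi₁ (Nat.le_sub_one_of_lt hik)) hA hB hi₁ hik
end

section
/- (Global Convergence) In the robot model on a line with two faulty robots, assume the visibility graph at time 0 is connected. Then for every robot i the sequence of positions t ↦ x t i converges to a limit in ℝ as t → ∞; in particular |x (t+1) i − x t i| → 0 for every i, and the whole configuration converges towards a fixed limit configuration. -/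
open Filter Topology

/-! Call the average of the least and the greatest value of `f` on `s` its midrange on `s`. Robots
that see each other stay within `V / 2` of their midpoint, so visibility is never lost and the
visibility graph is eventually constant. From then on every moving robot takes the midrange of a
fixed neighbourhood, so the upper limits `u` of the trajectories form a subsolution, and the lower
limits `v` a supersolution, of the equation `f = midrange of f`. By a maximum principle
`u ≤ v` as soon as every robot is joined by a path to one at which `u ≤ v`. A faulty robot is one;
in a component without faulty robots the leftmost robot is another, for the rule preserves the
order, so this robot stays leftmost and moves only to the right. -/

section Midrange

variable {α ι : Type*} {s : Set ι} {f g : ι → ℝ}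

/-- The midrange of `f` on `s`: the average of its least and its greatest value there, provided that
`s` is finite and nonempty. It is the target of a robot that sees exactly the robots in `s`. -/
noncomputable def midrange (s : Set ι) (f : ι → ℝ) : ℝ :=
  (sInf (f '' s) + sSup (f '' s)) / 2

theorem exists_midrange_eq (hs : s.Finite) (hne : s.Nonempty) (f : ι → ℝ) :
    ∃ a ∈ s, ∃ b ∈ s, (∀ j ∈ s, f a ≤ f j ∧ f j ≤ f b) ∧ midrange s f = (f a + f b) / 2 := by
  obtain ⟨a, ha, hmin⟩ := s.exists_min_image f hs hne
  obtain ⟨b, hb, hmax⟩ := s.exists_max_image f hs hne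
  have hleast : IsLeast (f '' s) (f a) := ⟨⟨a, ha, rfl⟩, Set.forall_mem_image.2 hmin⟩
  have hgreatest : IsGreatest (f '' s) (f b) := ⟨⟨b, hb, rfl⟩, Set.forall_mem_image.2 hmax⟩
  refine ⟨a, ha, b, hb, fun j hj => ⟨hmin j hj, hmax j hj⟩, ?_⟩
  rw [midrange, hleast.csInf_eq, hgreatest.csSup_eq]

theorem midrange_mem_Icc (hs : s.Finite) (hne : s.Nonempty) {a b : ℝ}
    (hf : ∀ j ∈ s, f j ∈ Set.Icc a b) : midrange s f ∈ Set.Icc a b := by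
  obtain ⟨j, hj, k, hk, -, hmid⟩ := exists_midrange_eq hs hne f
  obtain ⟨hja, hjb⟩ := hf j hj
  obtain ⟨hka, hkb⟩ := hf k hk
  constructor <;> linarith

theorem midrange_le_midrange_add (hs : s.Finite) (hne : s.Nonempty) {c : ℝ}
    (hfg : ∀ j ∈ s, f j ≤ g j + c) : midrange s f ≤ midrange s g + c := by
  obtain ⟨a, -, b, hb, hf, hf_mid⟩ := exists_midrange_eq hs hne f
  obtain ⟨a', ha', b', -, hg, hg_mid⟩ := exists_midrange_eq hs hne g
  have hmin : f a ≤ g a' + c := (hf a' ha').1.trans (hfg a' ha')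
  have hmax : f b ≤ g b' + c := (hfg b hb).trans (by linarith [(hg b hb).2])
  linarith

theorem limsup_midrange_le {l : Filter α} (hs : s.Finite) (hne : s.Nonempty) {x : α → ι → ℝ}
    (hx : ∀ j ∈ s, l.IsBoundedUnder (· ≤ ·) fun t => x t j)
    (hmid : l.IsCoboundedUnder (· ≤ ·) fun t => midrange s (x t)) :
    limsup (fun t => midrange s (x t)) l ≤ midrange s fun j => limsup (fun t => x t j) l := by
  refine le_of_forall_pos_le_add fun ε hε => limsup_le_of_le hmid ?_
  have hlt : ∀ᶠ t in l, ∀ j ∈ s, x t j < limsup (fun t => x t j) l + ε :=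
    hs.eventually_all.2 fun j hj => eventually_lt_of_limsup_lt (lt_add_of_pos_right _ hε) (hx j hj)
  filter_upwards [hlt] with t ht
  exact midrange_le_midrange_add hs hne fun j hj => (ht j hj).le

theorem midrange_liminf_le {l : Filter α} (hs : s.Finite) (hne : s.Nonempty) {x : α → ι → ℝ}
    (hx : ∀ j ∈ s, l.IsBoundedUnder (· ≥ ·) fun t => x t j)
    (hmid : l.IsCoboundedUnder (· ≥ ·) fun t => midrange s (x t)) :
    (midrange s fun j => liminf (fun t => x t j) l) ≤ liminf (fun t => midrange s (x t)) l := by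
  refine le_of_forall_pos_le_add fun ε hε => ?_
  rw [← sub_le_iff_le_add]
  refine le_liminf_of_le hmid ?_
  have hlt : ∀ᶠ t in l, ∀ j ∈ s, liminf (fun t => x t j) l - ε < x t j :=
    hs.eventually_all.2 fun j hj => eventually_lt_of_lt_liminf (sub_lt_self _ hε) (hx j hj)
  filter_upwards [hlt] with t ht
  rw [sub_le_iff_le_add]
  exact midrange_le_midrange_add hs hne fun j hj => (sub_lt_iff_lt_add.1 (ht j hj)).le

theorem eq_of_le_midrange_of_midrange_le (hs : s.Finite) (hne : s.Nonempty) {u v : ι → ℝ} {i : ι}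
    (hu : u i ≤ midrange s u) (hv : midrange s v ≤ v i)
    (hsub : ∀ j ∈ s, u j - v j ≤ u i - v i)
    (hmax : ∀ j ∈ s, u j - v j = u i - v i → u j ≤ u i) {j : ι} (hj : j ∈ s) :
    u j = u i ∧ v j = v i := by
  obtain ⟨a, -, b, hb, hu_mem, hu_mid⟩ := exists_midrange_eq hs hne u
  obtain ⟨a', ha', b', -, hv_mem, hv_mid⟩ := exists_midrange_eq hs hne v
  have hmin_sub : u a - v a' ≤ u i - v i := by linarith [hsub a' ha', (hu_mem a' ha').1]
  have hb_sub : u b - v b = u i - v i :=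
    (hsub b hb).antisymm (by linarith [(hv_mem b hb).2])
  have hub : u b ≤ u i := hmax b hb hb_sub
  obtain ⟨hu_ge, hu_le⟩ := hu_mem j hj
  obtain ⟨hv_ge, hv_le⟩ := hv_mem j hj
  constructor <;> linarith

end Midrange

section MidrangeDynamics

variable {ι : Type*} [Finite ι] {N : ι → Set ι}

theorem le_of_le_midrange_of_midrange_le (hN : ∀ i, (N i).Nonempty) {u v : ι → ℝ}
    (huv : ∀ i, u i ≤ v i ∨ u i ≤ midrange (N i) u ∧ midrange (N i) v ≤ v i)
    (hreach : ∀ i, ∃ k, u k ≤ v k ∧ Relation.ReflTransGen (fun j k => k ∈ N j) i k) : u ≤ v := by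
  intro i₀
  have : Nonempty ι := ⟨i₀⟩
  by_contra! hlt
  -- Among the maximizers of `u - v`, pick one maximizing `u`.
  obtain ⟨m, hm⟩ := Finite.exists_max fun i => toLex (u i - v i, u i)
  simp only [Prod.Lex.toLex_le_toLex] at hm
  have hsub : ∀ j, u j - v j ≤ u m - v m := fun j => (hm j).elim le_of_lt fun h => h.1.le
  have hmax : ∀ j, u j - v j = u m - v m → u j ≤ u m := fun j hj =>
    (hm j).elim (fun h => absurd hj h.ne) And.right
  obtain ⟨k, hk, hmk⟩ := hreach m
  have hpath : u k = u m ∧ v k = v m := by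
    clear hk
    induction hmk with
    | refl => exact ⟨rfl, rfl⟩
    | @tail i j _ hj ih =>
      obtain ⟨hu, hv⟩ := ih
      have hi : u i ≤ midrange (N i) u ∧ midrange (N i) v ≤ v i :=
        (huv i).resolve_left (by linarith [hsub i₀])
      rw [← hu, ← hv] at hsub hmax ⊢
      exact eq_of_le_midrange_of_midrange_le (Set.toFinite _) (hN i) hi.1 hi.2
        (fun j _ => hsub j) (fun j _ => hmax j) hj
  linarith [hsub i₀]

theorem exists_tendsto_of_eq_midrange (hN : ∀ i, (N i).Nonempty) {x : ℕ → ι → ℝ}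
    (hle : ∀ i, atTop.IsBoundedUnder (· ≤ ·) fun t => x t i)
    (hge : ∀ i, atTop.IsBoundedUnder (· ≥ ·) fun t => x t i)
    (hx : ∀ i, (∃ L, Tendsto (fun t => x t i) atTop (𝓝 L)) ∨
      ∀ t, x (t + 1) i = midrange (N i) (x t))
    (hreach : ∀ i, ∃ k, (∃ L, Tendsto (fun t => x t k) atTop (𝓝 L)) ∧
      Relation.ReflTransGen (fun j k => k ∈ N j) i k) (i : ι) :
    ∃ L, Tendsto (fun t => x t i) atTop (𝓝 L) := by
  set u : ι → ℝ := fun i => limsup (fun t => x t i) atTop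
  set v : ι → ℝ := fun i => liminf (fun t => x t i) atTop
  have huv_of_tendsto : ∀ k, (∃ L, Tendsto (fun t => x t k) atTop (𝓝 L)) → u k ≤ v k :=
    fun k ⟨_, hL⟩ => (hL.limsup_eq.trans hL.liminf_eq.symm).le
  have huv : ∀ i, u i ≤ v i ∨ u i ≤ midrange (N i) u ∧ midrange (N i) v ≤ v i := by
    refine fun i => (hx i).imp (huv_of_tendsto i) fun hi => ?_
    have hi' : (fun t => midrange (N i) (x t)) = fun t => x (t + 1) i := funext fun t => (hi t).symm
    have hu := limsup_midrange_le (l := atTop) (Set.toFinite _) (hN i) (fun j _ => hle j)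
      (hi' ▸ ((tendsto_add_atTop_nat 1).isBoundedUnder_comp (hge i)).isCoboundedUnder_le)
    have hv := midrange_liminf_le (l := atTop) (Set.toFinite _) (hN i) (fun j _ => hge j)
      (hi' ▸ ((tendsto_add_atTop_nat 1).isBoundedUnder_comp (hle i)).isCoboundedUnder_ge)
    rw [hi', limsup_nat_add fun t => x t i] at hu
    rw [hi', liminf_nat_add fun t => x t i] at hv
    exact ⟨hu, hv⟩
  have hle_all : u ≤ v := le_of_le_midrange_of_midrange_le hN huv fun i =>
    (hreach i).imp fun k hk => hk.imp_left (huv_of_tendsto k)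
  exact ⟨v i, tendsto_of_le_liminf_of_limsup_le le_rfl (hle_all i) (hle i) (hge i)⟩

end MidrangeDynamics

section Visibility

variable {ι : Type*} {V : ℝ} {p : ι → ℝ} {i j : ι}

/-- The robots visible from robot `i` in the configuration `p` (visibility radius `V`). -/
def visible (V : ℝ) (p : ι → ℝ) (i : ι) : Set ι :=
  {j | |p j - p i| ≤ V}

theorem mem_visible : j ∈ visible V p i ↔ p i - V ≤ p j ∧ p j ≤ p i + V := by
  change |p j - p i| ≤ V ↔ _
  rw [abs_sub_le_iff, sub_le_iff_le_add', sub_le_comm, and_comm]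

theorem mem_visible_self (hV : 0 ≤ V) (p : ι → ℝ) (i : ι) : i ∈ visible V p i := by
  simpa [mem_visible] using hV

theorem mem_visible_comm : j ∈ visible V p i ↔ i ∈ visible V p j := by
  rw [mem_visible, mem_visible, sub_le_iff_le_add, sub_le_iff_le_add, and_comm]

variable [Finite ι]

theorem midrange_visible_mono (hV : 0 ≤ V) (hij : p i ≤ p j) :
    midrange (visible V p i) p ≤ midrange (visible V p j) p := by
  have hi := mem_visible_self hV p i
  have hj := mem_visible_self hV p j
  obtain ⟨a, -, b, hb, hi_mem, hi_mid⟩ := exists_midrange_eq (Set.toFinite _) ⟨i, hi⟩ p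
  obtain ⟨a', ha', b', -, hj_mem, hj_mid⟩ := exists_midrange_eq (Set.toFinite _) ⟨j, hj⟩ p
  have hmin : p a ≤ p a' := by
    by_contra! hlt
    refine hlt.not_ge (hi_mem a' (mem_visible.2 ⟨?_, ?_⟩)).1
    · linarith [(mem_visible.1 ha').1]
    · linarith [(hi_mem i hi).1]
  have hmax : p b ≤ p b' := by
    by_contra! hlt
    refine hlt.not_ge (hj_mem b (mem_visible.2 ⟨?_, ?_⟩)).2
    · linarith [(hj_mem j hj).2]
    · linarith [(mem_visible.1 hb).2]
  linarith

theorem abs_midrange_visible_sub_midpoint_le (hj : j ∈ visible V p i) :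
    |midrange (visible V p i) p - (p i + p j) / 2| ≤ V / 2 := by
  obtain ⟨a, ha, b, hb, hmem, hmid⟩ := exists_midrange_eq (Set.toFinite _) ⟨j, hj⟩ p
  obtain ⟨haj, hjb⟩ := hmem j hj
  rw [abs_le]
  constructor <;> linarith [(mem_visible.1 ha).1, (mem_visible.1 hb).2]

end Visibility

/-- Fully synchronous executions of the point-convergence rule with visibility radius `V`, in which
the robots in `F` have crashed before time `0`. -/
structure IsCrashExecution {ι : Type*} (V : ℝ) (F : Set ι) (x : ℕ → ι → ℝ) : Prop where
  eq_of_mem : ∀ t, ∀ i ∈ F, x (t + 1) i = x t i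
  eq_of_notMem : ∀ t, ∀ i ∉ F, x (t + 1) i = midrange (visible V (x t) i) (x t)

namespace IsCrashExecution

variable {ι : Type*} {V : ℝ} {F : Set ι} {x : ℕ → ι → ℝ}

theorem shift (h : IsCrashExecution V F x) (T : ℕ) :
    IsCrashExecution V F fun t => x (t + T) where
  eq_of_mem t i hi := by rw [add_right_comm, h.eq_of_mem _ i hi]
  eq_of_notMem t i hi := by rw [add_right_comm, h.eq_of_notMem _ i hi]

theorem exists_tendsto_of_mem (h : IsCrashExecution V F x) {i : ι} (hi : i ∈ F) :
    ∃ L, Tendsto (fun t => x t i) atTop (𝓝 L) := by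
  have hconst : ∀ t, x t i = x 0 i := fun t => by
    induction t with
    | zero => rfl
    | succ t ih => rw [h.eq_of_mem t i hi, ih]
  exact ⟨x 0 i, by simp only [hconst, tendsto_const_nhds]⟩

variable [Finite ι]

theorem mem_Icc (h : IsCrashExecution V F x) (hV : 0 ≤ V) {a b : ℝ}
    (h₀ : ∀ i, x 0 i ∈ Set.Icc a b) (t : ℕ) : ∀ i, x t i ∈ Set.Icc a b := by
  induction t with
  | zero => exact h₀
  | succ t ih =>
    intro i
    by_cases hi : i ∈ F
    · rw [h.eq_of_mem t i hi]
      exact ih i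
    · rw [h.eq_of_notMem t i hi]
      exact midrange_mem_Icc (Set.toFinite _) ⟨i, mem_visible_self hV _ i⟩ fun j _ => ih j

theorem exists_forall_mem_Icc (h : IsCrashExecution V F x) (hV : 0 ≤ V) :
    ∃ a b, ∀ t i, x t i ∈ Set.Icc a b := by
  obtain ⟨a, ha⟩ := (Set.finite_range (x 0)).bddBelow
  obtain ⟨b, hb⟩ := (Set.finite_range (x 0)).bddAbove
  exact ⟨a, b, h.mem_Icc hV fun i => ⟨ha ⟨i, rfl⟩, hb ⟨i, rfl⟩⟩⟩

theorem abs_succ_sub_midpoint_le (h : IsCrashExecution V F x) {t : ℕ} {i j : ι}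
    (hj : j ∈ visible V (x t) i) : |x (t + 1) i - (x t i + x t j) / 2| ≤ V / 2 := by
  by_cases hi : i ∈ F
  · obtain ⟨hlower, hupper⟩ := mem_visible.1 hj
    rw [h.eq_of_mem t i hi, abs_le]
    constructor <;> linarith
  · rw [h.eq_of_notMem t i hi]
    exact abs_midrange_visible_sub_midpoint_le hj

theorem monotone_visible (h : IsCrashExecution V F x) : Monotone fun t => visible V (x t) := by
  refine monotone_nat_of_le_succ fun t i j hj => ?_
  obtain ⟨hi_lower, hi_upper⟩ := abs_le.1 (h.abs_succ_sub_midpoint_le hj)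
  obtain ⟨hj_lower, hj_upper⟩ := abs_le.1 (h.abs_succ_sub_midpoint_le (mem_visible_comm.1 hj))
  exact mem_visible.2 ⟨by linarith, by linarith⟩

theorem exists_forall_visible_eq (h : IsCrashExecution V F x) :
    ∃ T, ∀ t, visible V (x (t + T)) = visible V (x T) := by
  obtain ⟨T, hT⟩ := WellFoundedGT.monotone_chain_condition
    (⟨fun t => visible V (x t), h.monotone_visible⟩ : ℕ →o (ι → Set ι))
  exact ⟨T, fun t => (hT (t + T) (Nat.le_add_left T t)).symm⟩

theorem exists_tendsto_of_leftmost (h : IsCrashExecution V F x) (hV : 0 ≤ V) {C : Set ι}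
    (hCF : Disjoint C F) (hC : ∀ t, ∀ i ∈ C, visible V (x t) i ⊆ C) {i : ι} (hi : i ∈ C)
    (hmin : ∀ j ∈ C, x 0 i ≤ x 0 j) : ∃ L, Tendsto (fun t => x t i) atTop (𝓝 L) := by
  have hleft : ∀ t, ∀ j ∈ C, x t i ≤ x t j := fun t => by
    induction t with
    | zero => exact hmin
    | succ t ih =>
      intro j hj
      rw [h.eq_of_notMem t i (hCF.notMem_of_mem_left hi),
        h.eq_of_notMem t j (hCF.notMem_of_mem_left hj)]
      exact midrange_visible_mono hV (ih j hj)
  obtain ⟨a, b, hab⟩ := h.exists_forall_mem_Icc hV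
  have hmono : Monotone fun t => x t i := monotone_nat_of_le_succ fun t => by
    rw [h.eq_of_notMem t i (hCF.notMem_of_mem_left hi)]
    exact (midrange_mem_Icc (Set.toFinite _) ⟨i, mem_visible_self hV _ i⟩ fun j hj =>
      ⟨hleft t j (hC t i hi hj), (hab t j).2⟩).1
  exact ⟨_, tendsto_atTop_ciSup hmono ⟨b, Set.forall_mem_range.2 fun t => (hab t i).2⟩⟩

theorem exists_tendsto_of_visible_eq (h : IsCrashExecution V F x) (hV : 0 ≤ V)
    (hvis : ∀ t, visible V (x t) = visible V (x 0)) (i : ι) :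
    ∃ L, Tendsto (fun t => x t i) atTop (𝓝 L) := by
  obtain ⟨a, b, hab⟩ := h.exists_forall_mem_Icc hV
  refine exists_tendsto_of_eq_midrange (N := visible V (x 0))
    (fun i => ⟨i, mem_visible_self hV _ i⟩)
    (fun i => isBoundedUnder_of ⟨b, fun t => (hab t i).2⟩)
    (fun i => isBoundedUnder_of ⟨a, fun t => (hab t i).1⟩) (fun i => ?_) (fun i => ?_) i
  · refine (em (i ∈ F)).imp h.exists_tendsto_of_mem fun hi t => ?_
    rw [h.eq_of_notMem t i hi, hvis]
  · let C : Set ι := {k | Relation.ReflTransGen (fun j k => k ∈ visible V (x 0) j) i k}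
    by_cases hCF : Disjoint C F
    · obtain ⟨m, hm, hmin⟩ := C.exists_min_image (x 0) (Set.toFinite C) ⟨i, .refl⟩
      have hC : ∀ t, ∀ j ∈ C, visible V (x t) j ⊆ C := fun t j hj k hk => hj.tail (hvis t ▸ hk)
      exact ⟨m, h.exists_tendsto_of_leftmost hV hCF hC hm hmin, hm⟩
    · obtain ⟨k, hkC, hkF⟩ := Set.not_disjoint_iff.1 hCF
      exact ⟨k, h.exists_tendsto_of_mem hkF, hkC⟩

theorem exists_tendsto (h : IsCrashExecution V F x) (hV : 0 ≤ V) (i : ι) :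
    ∃ L, Tendsto (fun t => x t i) atTop (𝓝 L) := by
  obtain ⟨T, hT⟩ := h.exists_forall_visible_eq
  obtain ⟨L, hL⟩ := (h.shift T).exists_tendsto_of_visible_eq hV (by simpa using hT) i
  exact ⟨L, (tendsto_add_atTop_iff_nat T).1 hL⟩

end IsCrashExecution

theorem tendsto_abs_succ_sub {a : ℕ → ℝ} {L : ℝ} (ha : Tendsto a atTop (𝓝 L)) :
    Tendsto (fun t => |a (t + 1) - a t|) atTop (𝓝 0) := by
  simpa using (((tendsto_add_atTop_iff_nat 1).2 ha).sub ha).abs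

theorem global_convergence_general {n : ℕ} {V : ℝ} (hV : 0 ≤ V) (F : Set (Fin (n + 1)))
    {x : ℕ → Fin (n + 1) → ℝ} (hfault : ∀ t, ∀ i ∈ F, x (t + 1) i = x t i)
    (hupd : ∀ t, ∀ i ∉ F, x (t + 1) i = (lpos V x t i + rpos V x t i) / 2) (i : Fin (n + 1)) :
    (∃ L : ℝ, Tendsto (fun t => x t i) atTop (𝓝 L)) ∧
      Tendsto (fun t => |x (t + 1) i - x t i|) atTop (𝓝 0) := by
  have hexec : IsCrashExecution V F x := ⟨hfault, hupd⟩
  obtain ⟨L, hL⟩ := hexec.exists_tendsto hV i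
  exact ⟨⟨L, hL⟩, tendsto_abs_succ_sub hL⟩

/-- (Global Convergence) With two faulty robots, every robot's position
converges to a limit; in particular one-step displacements tend to `0`. -/
theorem global_convergence
    (n : ℕ) (hn : 2 ≤ n) (V D : ℝ) (hV : 0 < V) (hD : 0 < D)
    (x : ℕ → Fin (n + 1) → ℝ)
    (hfault0 : ∀ t : ℕ, x t 0 = 0)
    (hfaultn : ∀ t : ℕ, x t (Fin.last n) = D)
    (hupd : ∀ t : ℕ, ∀ i : Fin (n + 1), i ≠ 0 → i ≠ Fin.last n →
      x (t + 1) i = (lpos V x t i + rpos V x t i) / 2)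
    (hconn : ∀ i j : Fin (n + 1),
      Relation.ReflTransGen (fun a b : Fin (n + 1) => |x 0 a - x 0 b| ≤ V) i j)
    : ∀ i : Fin (n + 1),
      (∃ L : ℝ, Tendsto (fun t => x t i) atTop (nhds L)) ∧
      Tendsto (fun t => |x (t + 1) i - x t i|) atTop (nhds 0) := by
  exact global_convergence_general hV.le {0, Fin.last n} (by simp [hfault0, hfaultn])
    fun t i hi => hupd t i (fun h => hi (.inl h)) fun h => hi (.inr h)
end

section
/- (Single Fault) Consider the robot model on a line with a single faulty robot: fix an integer n ≥ 1 and a visibility radius V > 0, let x : ℕ → Fin (n+1) → ℝ give the position x t i of robot i at time t, where robot 0 is faulty and fixed (x t 0 = 0 for all t) and every other robot i obeys the synchronous update rule x (t+1) i = (l(i,t) + r(i,t))/2, with l(i,t) and r(i,t) the minimum and maximum positions of the robots within distance V of robot i at time t. If the visibility graph at time 0 (edges between robots at distance at most V) is connected, then x t i → 0 as t → ∞ for every robot i; i.e., all robots converge toward the single faulty robot. -/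
open Filter Topology

/-!
Both a robot that moves and one that stays put end up within `V / 2` of the midpoint of their old
position and that of any robot they saw, so two robots that see each other once do so forever.

Suppose that from some time on all robots are within `M` of the fault. A robot that sees one within
`m` of the fault is within `(M + m) / 2` of it one step later. Starting from the fault itself, a
robot reached by `n` edges of the initial visibility graph is thus eventually within
`(1 - 2⁻ⁿ) * M`. In a bounded configuration every robot sees one of some finitely many robots, so
one `n` serves for all, and `M` shrinks geometrically.
-/

theorem tendstoUniformly_of_eventually_dist_le_mul {α β γ : Type*} [PseudoMetricSpace γ]
    {l : Filter α} {f : α → β → γ} {g : β → γ} {c M : ℝ} (hc₀ : 0 ≤ c) (hc₁ : c < 1)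
    (hM : ∀ᶠ t in l, ∀ b, dist (f t b) (g b) ≤ M)
    (hstep : ∀ m, (∀ᶠ t in l, ∀ b, dist (f t b) (g b) ≤ m) →
      ∀ᶠ t in l, ∀ b, dist (f t b) (g b) ≤ c * m) :
    TendstoUniformly f g l := by
  have hpow (k : ℕ) : ∀ᶠ t in l, ∀ b, dist (f t b) (g b) ≤ c ^ k * M := by
    induction k with
    | zero => simpa using hM
    | succ k ih => simpa only [pow_succ', mul_assoc] using hstep _ ih
  have hlim : Tendsto (fun k : ℕ => c ^ k * M) atTop (𝓝 0) := by
    simpa using (tendsto_pow_atTop_nhds_zero_of_lt_one hc₀ hc₁).mul_const M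
  refine Metric.tendstoUniformly_iff.2 fun ε hε => ?_
  obtain ⟨k, hk⟩ := (hlim.eventually_lt_const hε).exists
  filter_upwards [hpow k] with t ht b
  rw [dist_comm]
  exact (ht b).trans_lt hk

section Configuration

variable {ι : Type*} {V : ℝ} {p : ι → ℝ} {i j : ι}

/-- Adjacency in the visibility graph of the configuration `p`. For `0 ≤ V` it
has a loop at every robot: a robot sees itself. -/
def Visible (V : ℝ) (p : ι → ℝ) (i j : ι) : Prop :=
  |p i - p j| ≤ V

/-- The point to which a non-faulty robot `i` moves from the configuration `p`: the midpoint of its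
farthest left and farthest right visible robots. For infinitely many robots these extremes are
taken as an infimum and a supremum, which need not be attained. -/
noncomputable def moveTarget (V : ℝ) (p : ι → ℝ) (i : ι) : ℝ :=
  (sInf (p '' {j | Visible V p j i}) + sSup (p '' {j | Visible V p j i})) / 2

theorem Visible.symm (h : Visible V p i j) : Visible V p j i := by
  rwa [Visible, abs_sub_comm]

theorem Visible.refl (hV : 0 ≤ V) (p : ι → ℝ) (i : ι) : Visible V p i i := by
  simpa [Visible] using hV

theorem exists_finite_forall_visible (hV : 0 < V) (hp : Bornology.IsBounded (Set.range p)) :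
    ∃ s : Set ι, s.Finite ∧ ∀ i, ∃ j ∈ s, Visible V p j i := by
  have htot : TotallyBounded (Set.range p) :=
    hp.isCompact_closure.totallyBounded.subset subset_closure
  obtain ⟨u, hup, hufin, hcover⟩ := Metric.finite_approx_of_totallyBounded htot V hV
  rw [← Set.image_univ] at hup
  obtain ⟨s, -, hs, rfl⟩ := hufin.exists_subset_finite_image_eq hup
  refine ⟨s, hs, fun i => ?_⟩
  obtain ⟨j, hj, hij⟩ : ∃ j ∈ s, dist (p i) (p j) < V := by
    simpa using hcover (Set.mem_range_self i)
  exact ⟨j, hj, Visible.symm hij.le⟩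

theorem moveTarget_mem_Icc {b c : ℝ} (hji : Visible V p j i)
    (hbc : ∀ k, Visible V p k i → p k ∈ Set.Icc b c) :
    moveTarget V p i ∈ Set.Icc ((b + p j) / 2) ((p j + c) / 2) := by
  set S := p '' {k | Visible V p k i}
  have hj : p j ∈ S := Set.mem_image_of_mem p hji
  have hS : S ⊆ Set.Icc b c := Set.image_subset_iff.2 hbc
  have hb : b ≤ sInf S := le_csInf ⟨_, hj⟩ fun _ hy => (hS hy).1
  have hc : sSup S ≤ c := csSup_le ⟨_, hj⟩ fun _ hy => (hS hy).2
  have hInf : sInf S ≤ p j := csInf_le (bddBelow_Icc.mono hS) hj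
  have hSup : p j ≤ sSup S := le_csSup (bddAbove_Icc.mono hS) hj
  constructor <;> unfold moveTarget <;> linarith

theorem abs_moveTarget_sub_midpoint_le (hji : Visible V p j i) :
    |moveTarget V p i - (p i + p j) / 2| ≤ V / 2 := by
  have hrange (k : ι) (hk : Visible V p k i) : p k ∈ Set.Icc (p i - V) (p i + V) :=
    Set.mem_Icc_iff_abs_le.1 hk.symm
  have hmem := moveTarget_mem_Icc hji hrange
  exact abs_le.2 ⟨by linarith [hmem.1], by linarith [hmem.2]⟩

theorem abs_moveTarget_sub_le {a m M : ℝ} (hM : ∀ k, Visible V p k i → |p k - a| ≤ M)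
    (hji : Visible V p j i) (hm : |p j - a| ≤ m) :
    |moveTarget V p i - a| ≤ (M + m) / 2 := by
  have hrange (k : ι) (hk : Visible V p k i) : p k ∈ Set.Icc (a - M) (a + M) := by
    rw [← Set.mem_Icc_iff_abs_le, abs_sub_comm]
    exact hM k hk
  have hmem := moveTarget_mem_Icc hji hrange
  obtain ⟨hm₁, hm₂⟩ := abs_le.1 hm
  exact abs_le.2 ⟨by linarith [hmem.1], by linarith [hmem.2]⟩

end Configuration

/-- `x` is a run of the robot model with visibility radius `V` in which exactly the robot `o` is
faulty, located at `a`. -/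
structure IsSingleFaultRun {ι : Type*} (V a : ℝ) (o : ι) (x : ℕ → ι → ℝ) : Prop where
  fault (t : ℕ) : x t o = a
  move (t : ℕ) (i : ι) (hi : i ≠ o) : x (t + 1) i = moveTarget V (x t) i

namespace IsSingleFaultRun

variable {ι : Type*} {V a : ℝ} {o : ι} {x : ℕ → ι → ℝ} {t : ℕ} {i j : ι}

theorem abs_succ_sub_midpoint_le (hx : IsSingleFaultRun V a o x) (hji : Visible V (x t) j i) :
    |x (t + 1) i - (x t i + x t j) / 2| ≤ V / 2 := by
  rcases eq_or_ne i o with rfl | hi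
  · have hhalf : x (t + 1) i - (x t i + x t j) / 2 = (x t i - x t j) / 2 := by
      rw [hx.fault (t + 1), hx.fault t]
      ring
    rw [hhalf, abs_div, abs_two]
    exact div_le_div_of_nonneg_right hji.symm zero_le_two
  · rw [hx.move t i hi]
    exact abs_moveTarget_sub_midpoint_le hji

theorem visible_succ (hx : IsSingleFaultRun V a o x) (hij : Visible V (x t) i j) :
    Visible V (x (t + 1)) i j := by
  have hi := hx.abs_succ_sub_midpoint_le hij.symm
  have hj := hx.abs_succ_sub_midpoint_le hij
  rw [add_comm (x t j), abs_sub_comm] at hj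
  calc |x (t + 1) i - x (t + 1) j|
      ≤ |x (t + 1) i - (x t i + x t j) / 2| + |(x t i + x t j) / 2 - x (t + 1) j| :=
        abs_sub_le _ _ _
    _ ≤ V := by linarith

theorem visible (hx : IsSingleFaultRun V a o x) (hij : Visible V (x 0) i j) (t : ℕ) :
    Visible V (x t) i j := by
  induction t with
  | zero => exact hij
  | succ t ih => exact hx.visible_succ ih

theorem abs_succ_sub_le {m M : ℝ} (hx : IsSingleFaultRun V a o x)
    (hM : ∀ k, |x t k - a| ≤ M) (hji : Visible V (x t) j i) (hm : |x t j - a| ≤ m) :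
    |x (t + 1) i - a| ≤ (M + m) / 2 := by
  rcases eq_or_ne i o with rfl | hi
  · rw [hx.fault, sub_self, abs_zero]
    linarith [(abs_nonneg _).trans (hM j), (abs_nonneg _).trans hm]
  · rw [hx.move t i hi]
    exact abs_moveTarget_sub_le (fun k _ => hM k) hji hm

theorem abs_sub_le_of_initial {M : ℝ} (hx : IsSingleFaultRun V a o x) (hV : 0 ≤ V)
    (hM : ∀ k, |x 0 k - a| ≤ M) (t : ℕ) (i : ι) : |x t i - a| ≤ M := by
  induction t generalizing i with
  | zero => exact hM i
  | succ t ih => simpa using hx.abs_succ_sub_le ih (.refl hV _ i) (ih i)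

theorem eventually_abs_sub_le_of_visible {m M : ℝ} (hx : IsSingleFaultRun V a o x)
    (hM : ∀ᶠ t in atTop, ∀ k, |x t k - a| ≤ M) (hji : Visible V (x 0) j i)
    (hm : ∀ᶠ t in atTop, |x t j - a| ≤ m) :
    ∀ᶠ t in atTop, |x t i - a| ≤ (M + m) / 2 := by
  rw [← map_add_atTop_eq_nat 1, eventually_map]
  filter_upwards [hM, hm] with t htM htm
  exact hx.abs_succ_sub_le htM (hx.visible hji t) htm

theorem exists_eventually_abs_sub_le (hx : IsSingleFaultRun V a o x)
    (hi : Relation.ReflTransGen (Visible V (x 0)) o i) :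
    ∃ n : ℕ, ∀ M, (∀ᶠ t in atTop, ∀ k, |x t k - a| ≤ M) →
      ∀ᶠ t in atTop, |x t i - a| ≤ (1 - (1 / 2) ^ n) * M := by
  induction hi with
  | refl => exact ⟨0, fun M _ => by simp [hx.fault]⟩
  | tail _ hjk ih =>
    obtain ⟨n, hn⟩ := ih
    refine ⟨n + 1, fun M hM => ?_⟩
    convert hx.eventually_abs_sub_le_of_visible hM hjk (hn M hM) using 3
    ring

theorem exists_eventually_forall_abs_sub_le (hx : IsSingleFaultRun V a o x) (hV : 0 < V)
    (hbdd : Bornology.IsBounded (Set.range (x 0)))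
    (hconn : ∀ i, Relation.ReflTransGen (Visible V (x 0)) o i) :
    ∃ n : ℕ, ∀ M, (∀ᶠ t in atTop, ∀ k, |x t k - a| ≤ M) →
      ∀ᶠ t in atTop, ∀ k, |x t k - a| ≤ (1 - (1 / 2) ^ n) * M := by
  obtain ⟨s, hs, hsee⟩ := exists_finite_forall_visible hV hbdd
  choose n hn using fun i => hx.exists_eventually_abs_sub_le (hconn i)
  obtain ⟨N, hN⟩ := (hs.image n).bddAbove
  refine ⟨N + 1, fun M hM => ?_⟩
  have hrate {j : ι} (hj : j ∈ s) : (1 - (1 / 2) ^ n j) * M ≤ (1 - (1 / 2) ^ N) * M := by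
    obtain ⟨t, ht⟩ := hM.exists
    have hM₀ : 0 ≤ M := (abs_nonneg _).trans (ht j)
    have hpow : (1 / 2 : ℝ) ^ N ≤ (1 / 2) ^ n j :=
      pow_le_pow_of_le_one (by norm_num) (by norm_num) (hN (Set.mem_image_of_mem n hj))
    gcongr
  have hnear : ∀ᶠ t in atTop, ∀ j ∈ s, |x t j - a| ≤ (1 - (1 / 2) ^ N) * M :=
    hs.eventually_all.2 fun j hj => (hn j M hM).mono fun _ ht => ht.trans (hrate hj)
  rw [← map_add_atTop_eq_nat 1, eventually_map]
  filter_upwards [hM, hnear] with t htM hts i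
  obtain ⟨j, hj, hji⟩ := hsee i
  calc |x (t + 1) i - a|
      ≤ (M + (1 - (1 / 2) ^ N) * M) / 2 := hx.abs_succ_sub_le htM (hx.visible hji t) (hts j hj)
    _ = (1 - (1 / 2) ^ (N + 1)) * M := by ring

end IsSingleFaultRun

theorem single_fault_convergence_general {ι : Type*} {V a : ℝ} {o : ι} {x : ℕ → ι → ℝ}
    (hV : 0 < V) (hx : IsSingleFaultRun V a o x)
    (hbdd : Bornology.IsBounded (Set.range (x 0)))
    (hconn : ∀ i, Relation.ReflTransGen (Visible V (x 0)) o i) :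
    TendstoUniformly x (fun _ => a) atTop := by
  obtain ⟨n, hn⟩ := hx.exists_eventually_forall_abs_sub_le hV hbdd hconn
  obtain ⟨M, hM⟩ := hbdd.subset_closedBall a
  have hinit (k : ι) : |x 0 k - a| ≤ M := hM (Set.mem_range_self k)
  exact tendstoUniformly_of_eventually_dist_le_mul
    (sub_nonneg.2 (pow_le_one₀ (by norm_num) (by norm_num))) (sub_lt_self 1 (by positivity))
    (Eventually.of_forall (hx.abs_sub_le_of_initial hV.le hinit)) hn

/-- (Single Fault) With a single faulty robot fixed at `0`, all robots
converge toward it. -/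
theorem single_fault_convergence
    (n : ℕ) (hn : 1 ≤ n) (V : ℝ) (hV : 0 < V)
    (x : ℕ → Fin (n + 1) → ℝ)
    (hfault0 : ∀ t : ℕ, x t 0 = 0)
    (hupd : ∀ t : ℕ, ∀ i : Fin (n + 1), i ≠ 0 →
      x (t + 1) i = (lpos V x t i + rpos V x t i) / 2)
    (hconn : ∀ i j : Fin (n + 1),
      Relation.ReflTransGen (fun a b : Fin (n + 1) => |x 0 a - x 0 b| ≤ V) i j) :
    ∀ i : Fin (n + 1), Tendsto (fun t => x t i) atTop (nhds 0) :=
  (single_fault_convergence_general hV ⟨hfault0, hupd⟩ (Set.finite_range (x 0)).isBounded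
    (hconn 0)).tendsto_at
end
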